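/- arXiv:1309.6931 — 2 statements merged into one kernel-verified Lean document; each statement's English description precedes it below -/
import Mathlib

section
/- For all natural numbers i, j with j ≤ i, the odd-even monic Legendre refinement integral has the balanced ₄F₃ representation I_{2i+1,2j} = 2^{2j−1} · [(−i)_j (−i−1/2)_j (2j)! / ((i+3/2)_j (i+1)_{j+1} (2j+1)_{2j})] · Σ_{k=0}^{i−j} [(−(i−j))_k (−i+j−1/2)_k (−i−j−1)_k (−i−j−1/2)_k] / [(−2i−1/2)_k (−i)_k (−i−1/2)_k k!]. -/
/-!
Expand the first factor in powers of `t`,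
`p_n(t) = (n!/(2n)!) ∑_k (-1)^k C(n,k) (2n-2k)!/(n-2k)! t^(n-2k)`, and integrate each power against
`p_b(2t-1)`. By Rodrigues' formula the latter is a multiple of the `b`-th derivative of
`(t(t-1))^b`, so `b` integrations by parts reduce the moment to a beta integral:
`∫_0^1 t^m p_b(2t-1) dt = 2^b (b!)²/(2b)! · (m!)²/((m-b)! (m+b+1)!)`, which vanishes for `m < b`
(`integral_pow_mul_legendreMonic`).

For `n = 2i+1` and `b = 2j` exactly the terms `k ≤ i - j` survive, and they agree one by one with
the terms of the hypergeometric series. The comparison turns pairs of Pochhammer symbols whose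
parameters differ by `1/2` into factorials (`poch_dup_odd`, `poch_dup_even`, `poch_dup_rising`).
-/

open MeasureTheory

/-- The monic Legendre polynomial of degree `n`,
`p_n(t) = (n!/(2n)!) dⁿ/dtⁿ (t²-1)ⁿ`. -/
noncomputable def legendreMonic (n : ℕ) : ℝ → ℝ := fun t =>
  ((n.factorial : ℝ) / (2 * n).factorial) * iteratedDeriv n (fun s => (s ^ 2 - 1) ^ n) t

/-- The monic Legendre refinement integral `I_{i,j} = ∫_0^1 p_i(t) p_j(2t-1) dt`. -/
noncomputable def alpertI (i j : ℕ) : ℝ :=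
  ∫ t in (0:ℝ)..1, legendreMonic i t * legendreMonic j (2 * t - 1)

/-- The Pochhammer symbol `(a)_k = a(a+1)⋯(a+k-1)`. -/
noncomputable def poch (a : ℝ) (k : ℕ) : ℝ := ∏ m ∈ Finset.range k, (a + m)

open Polynomial

/-! ### Expansion and Rodrigues formula -/

lemma iteratedDeriv_eval (p : ℝ[X]) (n : ℕ) :
    iteratedDeriv n (fun s => p.eval s) = fun s => (derivative^[n] p).eval s := by
  induction n generalizing p with
  | zero => simp
  | succ n ih =>
    rw [iteratedDeriv_succ', Function.iterate_succ_apply, ← ih]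
    congr 1
    funext x
    exact p.deriv

lemma iterate_derivative_comp_two_mul_sub_one (p : ℝ[X]) (n : ℕ) :
    derivative^[n] (p.comp (2 * X - 1)) = 2 ^ n * (derivative^[n] p).comp (2 * X - 1) := by
  induction n generalizing p with
  | zero => simp
  | succ n ih =>
    have h : derivative (p.comp (2 * X - 1)) = (2 * derivative p).comp (2 * X - 1) := by
      rw [derivative_comp]
      simp
    rw [Function.iterate_succ_apply, h, ih, Function.iterate_succ_apply]
    have h2 : (2 : ℝ[X]) * derivative p = ((2 : ℕ) : ℝ[X]) * derivative p := by simp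
    rw [h2, iterate_derivative_natCast_mul]
    simp
    ring

/-- The explicit expansion of the monic Legendre polynomial. Summands with `n < 2 * k` vanish,
since then `descFactorial` does, so the truncated exponent `n - 2 * k` is harmless. -/
lemma legendreMonic_eq_sum (n : ℕ) (t : ℝ) :
    legendreMonic n t = ∑ k ∈ Finset.range (n + 1),
      ((n.factorial : ℝ) / (2 * n).factorial) *
        ((-1) ^ k * (n.choose k) * ((2 * (n - k)).descFactorial n)) * t ^ (n - 2 * k) := by
  have h : (fun s : ℝ => (s ^ 2 - 1) ^ n) =
      fun s => (∑ k ∈ Finset.range (n + 1),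
        C ((-1 : ℝ) ^ k * (n.choose k)) * X ^ (2 * (n - k))).eval s := by
    funext s
    rw [show s ^ 2 - 1 = -1 + s ^ 2 by ring, add_pow, eval_finsetSum]
    refine Finset.sum_congr rfl fun k _ => ?_
    simp only [eval_mul, eval_C, eval_pow, eval_X, pow_mul]
    ring
  rw [legendreMonic, h, iteratedDeriv_eval, iterate_derivative_sum]
  beta_reduce
  rw [eval_finsetSum, Finset.mul_sum]
  refine Finset.sum_congr rfl fun k hk => ?_
  have hk' : k ≤ n := by simpa [Nat.lt_succ_iff] using hk
  rw [iterate_derivative_C_mul, iterate_derivative_X_pow_eq_natCast_mul,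
    show 2 * (n - k) - n = n - 2 * k by omega]
  simp only [eval_mul, eval_C, eval_pow, eval_X, eval_natCast]
  ring

/-- Rodrigues' formula for the monic Legendre polynomial transplanted to `[0, 1]`. -/
lemma legendreMonic_two_mul_sub_one (n : ℕ) (t : ℝ) :
    legendreMonic n (2 * t - 1) = ((n.factorial : ℝ) / (2 * n).factorial) * 2 ^ n *
      (derivative^[n] ((X * (X - 1) : ℝ[X]) ^ n)).eval t := by
  have h : (fun s : ℝ => (s ^ 2 - 1) ^ n) = fun s => (((X : ℝ[X]) ^ 2 - 1) ^ n).eval s := by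
    funext s
    simp
  have hc : (((X : ℝ[X]) ^ 2 - 1) ^ n).comp (2 * X - 1) =
      ((4 ^ n : ℕ) : ℝ[X]) * (X * (X - 1)) ^ n := by
    push_cast
    rw [← mul_pow, pow_comp]
    congr 1
    simp
    ring
  have key := congrArg (eval t) (iterate_derivative_comp_two_mul_sub_one ((X ^ 2 - 1) ^ n) n)
  rw [hc, iterate_derivative_natCast_mul] at key
  simp only [eval_mul, eval_natCast, eval_pow, eval_comp, eval_sub, eval_X, eval_one,
    eval_ofNat] at key
  rw [legendreMonic, h, iteratedDeriv_eval]
  have h4 : ((4 ^ n : ℕ) : ℝ) = 2 ^ n * 2 ^ n := by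
    push_cast
    rw [← mul_pow]
    norm_num
  rw [h4, mul_assoc] at key
  have := mul_left_cancel₀ (by positivity) key
  rw [mul_assoc, this]

/-! ### Moments -/

lemma integral_pow_mul_sub_one_pow (m n : ℕ) :
    (∫ t in (0 : ℝ)..1, t ^ m * (t - 1) ^ n) =
      (-1) ^ n * m.factorial * n.factorial / (m + n + 1).factorial := by
  induction n generalizing m with
  | zero =>
    simp [Nat.factorial_succ]
    field_simp
  | succ n ih =>
    have hu : ∀ x ∈ Set.uIcc (0 : ℝ) 1,
        HasDerivAt (fun x : ℝ => (x - 1) ^ (n + 1)) ((n + 1 : ℝ) * (x - 1) ^ n) x := by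
      intro x _
      have := ((hasDerivAt_id' x).sub_const 1).fun_pow (n + 1)
      simpa using this
    have hv : ∀ x ∈ Set.uIcc (0 : ℝ) 1,
        HasDerivAt (fun x : ℝ => x ^ (m + 1) / (m + 1)) (x ^ m) x := by
      intro x _
      have := (hasDerivAt_pow (m + 1) x).div_const (m + 1 : ℝ)
      have hm : (m + 1 : ℝ) ≠ 0 := by positivity
      simpa [mul_div_assoc, mul_div_cancel_left₀ _ hm] using this
    have := intervalIntegral.integral_mul_deriv_eq_deriv_mul hu hv
      (Continuous.intervalIntegrable (by fun_prop) _ _)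
      (Continuous.intervalIntegrable (by fun_prop) _ _)
    calc (∫ t in (0 : ℝ)..1, t ^ m * (t - 1) ^ (n + 1))
        = ∫ t in (0 : ℝ)..1, (t - 1) ^ (n + 1) * t ^ m := by simp only [mul_comm]
      _ = -((n + 1) / (m + 1) * ∫ t in (0 : ℝ)..1, t ^ (m + 1) * (t - 1) ^ n) := by
          rw [this, ← intervalIntegral.integral_const_mul]
          simp only [sub_self, ne_eq, Nat.add_eq_zero_iff, one_ne_zero, and_false,
            not_false_eq_true, zero_pow, zero_mul, zero_div, mul_zero, zero_sub, neg_inj]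
          refine intervalIntegral.integral_congr fun x _ => ?_
          ring
      _ = _ := by
          rw [ih, show m + 1 + n + 1 = m + (n + 1) + 1 by ring, Nat.factorial_succ m,
            Nat.factorial_succ n]
          push_cast
          field_simp
          ring

/-- Repeated integration by parts against the derivatives of `(x (x - 1)) ^ n`; the boundary terms
vanish as long as at most `n` derivatives are moved. For `m < l` both sides are zero. -/
lemma integral_pow_mul_iterate_derivative (n l m : ℕ) (hl : l ≤ n) :
    (∫ t in (0 : ℝ)..1, t ^ m * (derivative^[l] ((X * (X - 1) : ℝ[X]) ^ n)).eval t) =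
      (-1) ^ l * m.descFactorial l *
        ∫ t in (0 : ℝ)..1, t ^ (m - l) * (((X * (X - 1) : ℝ[X]) ^ n)).eval t := by
  induction l generalizing m with
  | zero => simp
  | succ l ih =>
    set q := derivative^[l] ((X * (X - 1) : ℝ[X]) ^ n) with hq
    have hdvd : (X * (X - 1) : ℝ[X]) ∣ q :=
      (dvd_pow_self _ (by omega)).trans
        (pow_sub_dvd_iterate_derivative_of_pow_dvd l (dvd_refl ((X * (X - 1) : ℝ[X]) ^ n)))
    obtain ⟨r, hr⟩ := hdvd
    have h0 : q.eval 0 = 0 := by simp [hr]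
    have h1 : q.eval 1 = 0 := by simp [hr]
    rw [Function.iterate_succ_apply', ← hq,
      intervalIntegral.integral_mul_deriv_eq_deriv_mul
        (fun x _ => hasDerivAt_pow m x) (fun x _ => q.hasDerivAt x)
        (Continuous.intervalIntegrable (by fun_prop) _ _)
        (Continuous.intervalIntegrable (by fun_prop) _ _), h0, h1]
    simp only [mul_assoc]
    rw [intervalIntegral.integral_const_mul, ih _ (by omega)]
    cases m with
    | zero => simp
    | succ m =>
      rw [Nat.succ_descFactorial_succ]
      simp only [Nat.add_sub_add_right]
      push_cast
      ring

/-- The moments of the transplanted Legendre polynomial; `descFactorial` makes those with `m < n`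
vanish (orthogonality). -/
lemma integral_pow_mul_legendreMonic (n m : ℕ) :
    (∫ t in (0 : ℝ)..1, t ^ m * legendreMonic n (2 * t - 1)) =
      ((n.factorial : ℝ) / (2 * n).factorial) * 2 ^ n *
        (m.descFactorial n * (m.factorial * n.factorial / (m + n + 1).factorial)) := by
  have h : ∀ t : ℝ, t ^ m * legendreMonic n (2 * t - 1) =
      ((n.factorial : ℝ) / (2 * n).factorial) * 2 ^ n *
        (t ^ m * (derivative^[n] ((X * (X - 1) : ℝ[X]) ^ n)).eval t) := by
    intro t
    rw [legendreMonic_two_mul_sub_one]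
    ring
  simp only [h]
  rw [intervalIntegral.integral_const_mul, integral_pow_mul_iterate_derivative n n m le_rfl]
  congr 1
  rcases lt_or_ge m n with hmn | hmn
  · simp [Nat.descFactorial_of_lt hmn]
  · have h2 : ∀ t : ℝ, t ^ (m - n) * (((X * (X - 1) : ℝ[X]) ^ n)).eval t =
        t ^ m * (t - 1) ^ n := by
      intro t
      simp only [eval_mul, eval_pow, eval_sub, eval_X, eval_one]
      rw [mul_pow, ← mul_assoc, ← pow_add, Nat.sub_add_cancel hmn]
    simp only [h2]
    rw [integral_pow_mul_sub_one_pow]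
    have hs : ((-1 : ℝ) ^ n) * (-1) ^ n = 1 := by rw [← mul_pow]; simp
    linear_combination (m.descFactorial n * (m.factorial * n.factorial / (m + n + 1).factorial) : ℝ)
      * hs

lemma alpertI_eq_sum (a b : ℕ) :
    alpertI a b = ∑ k ∈ Finset.range (a + 1),
      ((a.factorial : ℝ) / (2 * a).factorial) *
        ((-1) ^ k * (a.choose k) * ((2 * (a - k)).descFactorial a)) *
      (((b.factorial : ℝ) / (2 * b).factorial) * 2 ^ b *
        ((a - 2 * k).descFactorial b *
          ((a - 2 * k).factorial * b.factorial / (a - 2 * k + b + 1).factorial))) := by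
  have hcont : Continuous fun t : ℝ => legendreMonic b (2 * t - 1) := by
    simp only [legendreMonic_two_mul_sub_one]
    fun_prop
  rw [alpertI]
  simp only [legendreMonic_eq_sum a, Finset.sum_mul]
  rw [intervalIntegral.integral_finsetSum
    fun k _ => Continuous.intervalIntegrable (by fun_prop) _ _]
  refine Finset.sum_congr rfl fun k _ => ?_
  simp only [mul_assoc _ (_ ^ (a - 2 * k)) (legendreMonic b _)]
  rw [intervalIntegral.integral_const_mul, integral_pow_mul_legendreMonic]

/-! ### Pochhammer symbols as factorials -/

lemma poch_succ (a : ℝ) (k : ℕ) : poch a (k + 1) = poch a k * (a + k) :=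
  Finset.prod_range_succ _ _

/-- `(-(k + l))_k = (-1)^k (k + l)! / l!`. -/
lemma poch_neg (k l : ℕ) (a : ℝ) (ha : a = -(k + l : ℝ)) :
    poch a k * l.factorial = (-1) ^ k * (k + l).factorial := by
  induction k generalizing l with
  | zero => simp [poch]
  | succ k ih =>
    have := ih (l + 1) (by rw [ha]; push_cast; ring)
    rw [Nat.factorial_succ, show k + (l + 1) = k + 1 + l by ring] at this
    push_cast at this
    have hak : a + k = -(l + 1 : ℝ) := by rw [ha]; push_cast; ring
    rw [poch_succ, hak]
    linear_combination -this

/-- The duplication formula `(-N)_k (-N - 1/2)_k = (2N + 1)! / (4^k (2l + 1)!)`, `N = k + l`. -/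
lemma poch_dup_odd (k l : ℕ) (a b : ℝ) (ha : a = -(k + l : ℝ)) (hb : b = -(k + l : ℝ) - 1 / 2) :
    poch a k * poch b k * 4 ^ k * (2 * l + 1).factorial = (2 * (k + l) + 1).factorial := by
  induction k generalizing l with
  | zero => simp [poch]
  | succ k ih =>
    have := ih (l + 1) (by rw [ha]; push_cast; ring) (by rw [hb]; push_cast; ring)
    rw [show 2 * (l + 1) + 1 = 2 * l + 1 + 1 + 1 by ring, Nat.factorial_succ, Nat.factorial_succ,
      show k + (l + 1) = k + 1 + l by ring] at this
    push_cast at this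
    rw [poch_succ, poch_succ, ← this, ha, hb]
    push_cast
    ring

/-- The duplication formula `(-N)_k (-N + 1/2)_k = (2N)! / (4^k (2l)!)`, `N = k + l`. -/
lemma poch_dup_even (k l : ℕ) (a b : ℝ) (ha : a = -(k + l : ℝ)) (hb : b = -(k + l : ℝ) + 1 / 2) :
    poch a k * poch b k * 4 ^ k * (2 * l).factorial = (2 * (k + l)).factorial := by
  induction k generalizing l with
  | zero => simp [poch]
  | succ k ih =>
    have := ih (l + 1) (by rw [ha]; push_cast; ring) (by rw [hb]; push_cast; ring)
    rw [show 2 * (l + 1) = 2 * l + 1 + 1 by ring, Nat.factorial_succ, Nat.factorial_succ,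
      show k + (l + 1) = k + 1 + l by ring] at this
    push_cast at this
    rw [poch_succ, poch_succ, ← this, ha, hb]
    push_cast
    ring

lemma poch_nat (n k : ℕ) (a : ℝ) (ha : a = n + 1) :
    poch a k * n.factorial = (n + k).factorial := by
  induction k with
  | zero => simp [poch]
  | succ k ih =>
    rw [poch_succ, ← add_assoc, Nat.factorial_succ]
    push_cast
    rw [← ih, ha]
    ring

/-- `(i + 1)_{j+1} (i + 3/2)_j = (2i + 2j + 2)! / (2^(2j+1) (2i + 1)!)`. -/
lemma poch_dup_rising (i j : ℕ) :
    poch ((i : ℝ) + 1) (j + 1) * poch ((i : ℝ) + 3 / 2) j * (2 * 4 ^ j) * (2 * i + 1).factorial =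
      (2 * i + 2 * j + 2).factorial := by
  induction j with
  | zero =>
    rw [show 2 * i + 2 * 0 + 2 = 2 * i + 1 + 1 by ring, Nat.factorial_succ (2 * i + 1),
      Nat.cast_mul]
    simp only [poch, Finset.prod_range_succ, Finset.prod_range_zero, Nat.cast_add, Nat.cast_mul,
      Nat.cast_ofNat, Nat.cast_zero, Nat.cast_one]
    ring
  | succ j ih =>
    rw [show 2 * i + 2 * (j + 1) + 2 = 2 * i + 2 * j + 2 + 1 + 1 by ring,
      Nat.factorial_succ (2 * i + 2 * j + 2 + 1),
      Nat.factorial_succ (2 * i + 2 * j + 2), Nat.cast_mul, Nat.cast_mul, ← ih,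
      poch_succ _ (j + 1), poch_succ ((i : ℝ) + 3 / 2) j]
    simp only [Nat.cast_add, Nat.cast_mul, Nat.cast_ofNat, Nat.cast_one]
    ring

/-! ### Termwise comparison -/

theorem alpertI_odd_even (i j : ℕ) (hij : j ≤ i) :
    alpertI (2 * i + 1) (2 * j) =
      (2 : ℝ) ^ (2 * (j : ℤ) - 1) *
        (poch (-(i : ℝ)) j * poch (-(i : ℝ) - 1 / 2) j * (2 * j).factorial /
          (poch ((i : ℝ) + 3 / 2) j * poch ((i : ℝ) + 1) (j + 1) * poch (2 * j + 1) (2 * j))) *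
        ∑ k ∈ Finset.range (i - j + 1),
          poch (-((i : ℝ) - j)) k * poch (-(i : ℝ) + j - 1 / 2) k *
              poch (-(i : ℝ) - j - 1) k * poch (-(i : ℝ) - j - 1 / 2) k /
            (poch (-2 * i - 1 / 2) k * poch (-(i : ℝ)) k * poch (-(i : ℝ) - 1 / 2) k *
              k.factorial) := by
  have hf : ∀ n : ℕ, (n.factorial : ℝ) ≠ 0 := fun n => by positivity
  have hpre : (2 : ℝ) ^ (2 * (j : ℤ) - 1) *
        (poch (-(i : ℝ)) j * poch (-(i : ℝ) - 1 / 2) j * (2 * j).factorial /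
          (poch ((i : ℝ) + 3 / 2) j * poch ((i : ℝ) + 1) (j + 1) * poch (2 * j + 1) (2 * j))) =
      4 ^ j * (2 * j).factorial ^ 2 * (2 * i + 1).factorial ^ 2 /
        ((4 * j).factorial * (2 * (i - j) + 1).factorial * (2 * i + 2 * j + 2).factorial) := by
    obtain ⟨d, rfl⟩ := Nat.exists_eq_add_of_le hij
    have hA := poch_dup_odd j d (-((j + d : ℕ) : ℝ)) (-((j + d : ℕ) : ℝ) - 1 / 2)
      (by push_cast; ring) (by push_cast; ring)
    have hR := poch_dup_rising (j + d) j
    have hN := poch_nat (2 * j) (2 * j) (2 * (j : ℝ) + 1) (by push_cast; ring)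
    rw [show 2 * j + 2 * j = 4 * j by ring] at hN
    have h2 : (2 : ℝ) ^ (2 * (j : ℤ) - 1) = 4 ^ j / 2 := by
      rw [zpow_sub₀ (by norm_num), zpow_mul]
      norm_num
    rw [h2, Nat.add_sub_cancel_left, ← hN, ← hR]
    have hR0 := hf (2 * (j + d) + 2 * j + 2)
    have hN0 := hf (4 * j)
    rw [← hR] at hR0
    rw [← hN] at hN0
    have hx := left_ne_zero_of_mul (left_ne_zero_of_mul (left_ne_zero_of_mul hR0))
    have hy := right_ne_zero_of_mul (left_ne_zero_of_mul (left_ne_zero_of_mul hR0))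
    have hz := left_ne_zero_of_mul hN0
    have h4 := hf (2 * (j + d) + 1)
    have h5 := hf (2 * d + 1)
    have h6 := hf (2 * j)
    rw [eq_div_of_mul_eq (by positivity)
      (show poch (-((j + d : ℕ) : ℝ)) j * poch (-((j + d : ℕ) : ℝ) - 1 / 2) j *
        (4 ^ j * (2 * d + 1).factorial) = (2 * (j + d) + 1).factorial by rw [← hA]; ring)]
    field_simp
  rw [hpre, alpertI_eq_sum, Finset.mul_sum]
  symm
  -- Only the powers `t ^ (2i + 1 - 2k)` with `k ≤ i - j` contribute.
  refine (Finset.sum_congr rfl ?_).trans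
    (Finset.sum_subset (Finset.range_subset_range.2 (by omega : i - j + 1 ≤ 2 * i + 1 + 1)) ?_)
  · intro k hk
    obtain ⟨l, rfl⟩ : ∃ l, i = j + k + l :=
      ⟨i - j - k, by have := Finset.mem_range.1 hk; omega⟩
    have h12 : poch (-(((j + k + l : ℕ) : ℝ) - j)) k * poch (-((j + k + l : ℕ) : ℝ) + j - 1 / 2) k =
        (2 * (k + l) + 1).factorial / (4 ^ k * (2 * l + 1).factorial) := by
      refine eq_div_of_mul_eq (by positivity) ?_
      rw [← mul_assoc]
      exact poch_dup_odd k l _ _ (by push_cast; ring) (by push_cast; ring)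
    have h34 : poch (-((j + k + l : ℕ) : ℝ) - j - 1) k *
        poch (-((j + k + l : ℕ) : ℝ) - j - 1 / 2) k =
        (2 * (k + (2 * j + l + 1))).factorial / (4 ^ k * (2 * (2 * j + l + 1)).factorial) := by
      refine eq_div_of_mul_eq (by positivity) ?_
      rw [← mul_assoc]
      exact poch_dup_even k (2 * j + l + 1) _ _ (by push_cast; ring) (by push_cast; ring)
    have h67 : poch (-((j + k + l : ℕ) : ℝ)) k * poch (-((j + k + l : ℕ) : ℝ) - 1 / 2) k =
        (2 * (k + (j + l)) + 1).factorial / (4 ^ k * (2 * (j + l) + 1).factorial) := by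
      refine eq_div_of_mul_eq (by positivity) ?_
      rw [← mul_assoc]
      exact poch_dup_odd k (j + l) _ _ (by push_cast; ring) (by push_cast; ring)
    -- The unpaired `(-2i - 1/2)_k` is the quotient of a duplicated product by `(-2i - 1)_k`.
    have h5 : poch (-2 * ((j + k + l : ℕ) : ℝ) - 1 / 2) k =
        (-1) ^ k * (2 * (k + (2 * j + k + 2 * l + 1))).factorial *
          (2 * j + k + 2 * l + 1).factorial /
          (4 ^ k * (2 * (2 * j + k + 2 * l + 1)).factorial *
            (k + (2 * j + k + 2 * l + 1)).factorial) := by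
      have hE := poch_dup_even k (2 * j + k + 2 * l + 1) (-2 * ((j + k + l : ℕ) : ℝ) - 1)
        (-2 * ((j + k + l : ℕ) : ℝ) - 1 / 2) (by push_cast; ring) (by push_cast; ring)
      have hP := poch_neg k (2 * j + k + 2 * l + 1) (-2 * ((j + k + l : ℕ) : ℝ) - 1)
        (by push_cast; ring)
      have hs : ((-1 : ℝ) ^ k) * (-1) ^ k = 1 := by rw [← mul_pow]; simp
      rw [eq_div_iff (by positivity), ← hE]
      linear_combination (-(poch (-2 * ((j + k + l : ℕ) : ℝ) - 1 / 2) k * 4 ^ k *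
        (2 * (2 * j + k + 2 * l + 1)).factorial * (-1) ^ k)) * hP -
        poch (-2 * ((j + k + l : ℕ) : ℝ) - 1 / 2) k * 4 ^ k *
        (2 * (2 * j + k + 2 * l + 1)).factorial * (k + (2 * j + k + 2 * l + 1)).factorial * hs
    have hd1 := Nat.factorial_mul_descFactorial
      (by omega : 2 * (j + k + l) + 1 ≤ 2 * (2 * (j + k + l) + 1 - k))
    have hd2 := Nat.factorial_mul_descFactorial
      (by omega : 2 * j ≤ 2 * (j + k + l) + 1 - 2 * k)
    have hch := Nat.choose_mul_factorial_mul_factorial (by omega : k ≤ 2 * (j + k + l) + 1)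
    rw [show 2 * (2 * (j + k + l) + 1 - k) - (2 * (j + k + l) + 1) = 2 * (j + l) + 1 by omega]
      at hd1
    rw [show 2 * (j + k + l) + 1 - 2 * k - 2 * j = 2 * l + 1 by omega] at hd2
    rw [show 2 * (j + k + l) + 1 - 2 * k = 2 * (j + l) + 1 by omega] at hd2 ⊢
    rw [show 2 * (j + k + l) + 1 - k = 2 * j + k + 2 * l + 1 by omega] at hd1 hch ⊢
    have hd1' := congrArg (Nat.cast : ℕ → ℝ) hd1
    have hd2' := congrArg (Nat.cast : ℕ → ℝ) hd2
    have hch' := congrArg (Nat.cast : ℕ → ℝ) hch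
    rw [Nat.cast_mul, mul_comm] at hd1' hd2'
    rw [Nat.cast_mul, Nat.cast_mul, mul_assoc] at hch'
    rw [eq_div_of_mul_eq (hf _) hd1', eq_div_of_mul_eq (hf _) hd2',
      eq_div_of_mul_eq (mul_ne_zero (hf _) (hf _)) hch']
    rw [h12, mul_assoc (_ / _) (poch _ k) (poch _ k), h34,
      mul_assoc (poch _ k) (poch _ k) (poch _ k), h67, h5]
    rw [show k + (2 * j + k + 2 * l + 1) = 2 * (j + k + l) + 1 by ring,
      show k + (j + l) = j + k + l by ring, show j + k + l - j = k + l by omega,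
      show 2 * (j + l) + 1 + 2 * j + 1 = 2 * (2 * j + l + 1) by ring,
      show 2 * (k + (2 * j + l + 1)) = 2 * (j + k + l) + 2 * j + 2 by ring,
      show 2 * (2 * j) = 4 * j by ring, pow_mul (2 : ℝ) 2 j, show (2 : ℝ) ^ 2 = 4 by norm_num]
    have hs : ((-1 : ℝ) ^ k) * (-1) ^ k = 1 := by rw [← mul_pow]; simp
    have hs0 : ((-1 : ℝ) ^ k) ≠ 0 := left_ne_zero_of_mul_eq_one hs
    generalize ((-1 : ℝ) ^ k) = s at *
    field_simp
    linear_combination -hs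
  · intro k _ hk
    have hk' : i - j < k := by
      have := mt Finset.mem_range.2 hk
      omega
    rcases Nat.eq_zero_or_pos j with rfl | hj
    · rw [Nat.descFactorial_of_lt (by omega : 2 * (2 * i + 1 - k) < 2 * i + 1)]
      simp
    · rw [Nat.descFactorial_of_lt (by omega : 2 * i + 1 - 2 * k < 2 * j)]
      simp
end

section
/- The Alpert refinement coefficients solve a generalized eigenvalue problem in the row index: for all natural numbers i, j with 1 ≤ i and j ≤ i (using the convention c_{a,b} = 0 whenever b > a), (i(i+1)(i+2)/sqrt((2i+3)(2i+1)))·c_{i+1,j} + ((i−1)i(i+1)/sqrt((2i+1)(2i−1)))·c_{i−1,j} = j(j+1)·[ (i/sqrt((2i+3)(2i+1)))·c_{i+1,j} + c_{i,j} + ((i+1)/sqrt((2i+1)(2i−1)))·c_{i−1,j} ]. -/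
/-!
Let `P n` be the Legendre polynomials, `Q(t) = P j (2t-1)`, and
`R = i P_{i+1} + (2i+1) P_i + (i+1) P_{i-1}`. After cancelling the normalisations, the claim reads
`∫₀¹ (i(i+1)(i+2) P_{i+1} + (i-1)i(i+1) P_{i-1}) Q = j(j+1) ∫₀¹ R Q`.

Both sides are linked by the operator `L f = (t(1-t) f')'`, which is symmetric on `[0,1]` because
`t(1-t)` vanishes at the endpoints. On the one hand `L Q = -j(j+1) Q` (Legendre's equation on
`[0,1]`). On the other hand `R' = (2i+1)(1+t) P_i'`, so that `t(1-t)R' = (2i+1) t (1-t²) P_i'` and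
the classical relations for Legendre polynomials give
`L R = -(i(i+1)(i+2) P_{i+1} + (i-1)i(i+1) P_{i-1})`.

All relations among the `P n` follow from the two identities `legendreP_derivative_succ` and
`legendreP_X_mul_derivative`, which are read off the Rodrigues formula.
-/

open MeasureTheory

/-- The orthonormal Legendre polynomial of degree `n` on `[-1,1]`,
`p̂_n(t) = sqrt((2n+1)/2) · (1/(2^n n!)) dⁿ/dtⁿ (t²-1)ⁿ`. -/
noncomputable def legendreHat (n : ℕ) : ℝ → ℝ := fun t =>
  Real.sqrt ((2 * n + 1) / 2) * ((1 : ℝ) / (2 ^ n * n.factorial)) *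
    iteratedDeriv n (fun s => (s ^ 2 - 1) ^ n) t

/-- The Alpert refinement coefficients `c_{i,j} = 2∫_0^1 p̂_i(t) p̂_j(2t-1) dt`. -/
noncomputable def alpertC (i j : ℕ) : ℝ :=
  2 * ∫ t in (0:ℝ)..1, legendreHat i t * legendreHat j (2 * t - 1)

open Polynomial

/-- The Legendre polynomial of degree `n`, with `P n (1) = 1`, given by the Rodrigues formula. -/
noncomputable def legendreP (n : ℕ) : ℝ[X] :=
  C ((1 : ℝ) / (2 ^ n * n.factorial)) * derivative^[n] ((X ^ 2 - 1) ^ n)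

lemma legendreHat_eq (n : ℕ) (t : ℝ) :
    legendreHat n t = Real.sqrt ((2 * n + 1) / 2) * (legendreP n).eval t := by
  have key : ∀ (k : ℕ) (p : ℝ[X]),
      iteratedDeriv k (fun s => p.eval s) = fun s => (derivative^[k] p).eval s := by
    intro k
    induction k with
    | zero => intro p; simp
    | succ k ih =>
      intro p
      rw [iteratedDeriv_succ', Function.iterate_succ_apply, ← ih]
      congr 1
      funext s
      exact p.deriv
  have h := congrFun (key n ((X ^ 2 - 1) ^ n)) t
  simp only [eval_pow, eval_sub, eval_X, eval_one] at h
  rw [legendreHat, h, legendreP, eval_mul, eval_C, mul_assoc]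

lemma normalization_succ (n : ℕ) :
    (1 : ℝ) / (2 ^ (n + 1) * (n + 1).factorial) * (2 * (n + 1)) = 1 / (2 ^ n * n.factorial) := by
  have : (n.factorial : ℝ) ≠ 0 := by exact_mod_cast n.factorial_ne_zero
  have : (n : ℝ) + 1 ≠ 0 := by positivity
  rw [Nat.factorial_succ]
  push_cast
  field_simp
  ring

/-- `P_{n+1}' = t P_n' + (n+1) P_n`. -/
lemma legendreP_derivative_succ (n : ℕ) :
    derivative (legendreP (n + 1)) =
      X * derivative (legendreP n) + C ((n : ℝ) + 1) * legendreP n := by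
  have h1 : derivative ((X ^ 2 - 1 : ℝ[X]) ^ (n + 1)) =
      C (2 * ((n : ℝ) + 1)) * (X * (X ^ 2 - 1) ^ n) := by
    simp [derivative_pow]
    ring
  simp only [legendreP, derivative_C_mul]
  rw [← Function.iterate_succ_apply' (f := derivative),
    ← Function.iterate_succ_apply' (f := derivative),
    Function.iterate_succ_apply, h1, iterate_derivative_C_mul, ← mul_assoc, ← C_mul,
    normalization_succ, mul_comm X, iterate_derivative_mul_X]
  simp only [nsmul_eq_mul, C_add, C_1, map_natCast, Nat.add_sub_cancel]
  push_cast
  ring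

/-- `t P_{n+1}' = P_n' + (n+1) P_{n+1}`. -/
lemma legendreP_X_mul_derivative (n : ℕ) :
    X * derivative (legendreP (n + 1)) =
      derivative (legendreP n) + C ((n : ℝ) + 1) * legendreP (n + 1) := by
  -- Apply `D^{n+1}` to `t w_{n+1}' = 2(n+1) (w_{n+1} + w_n)`, where `w_m = (t²-1)^m`.
  have h1 : derivative ((X ^ 2 - 1 : ℝ[X]) ^ (n + 1)) * X =
      C (2 * ((n : ℝ) + 1)) * ((X ^ 2 - 1) ^ (n + 1) + (X ^ 2 - 1) ^ n) := by
    simp [derivative_pow]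
    ring
  have h2 := congrArg (fun p => C ((1 : ℝ) / (2 ^ (n + 1) * (n + 1).factorial)) *
    derivative^[n + 1] p) h1
  simp only [iterate_derivative_C_mul, iterate_derivative_mul_X, iterate_map_add] at h2
  rw [← mul_assoc, ← C_mul, normalization_succ, ← Function.iterate_succ_apply,
    Nat.add_sub_cancel, ← Function.iterate_succ_apply (f := derivative)] at h2
  have h3 := congrArg (C : ℝ → ℝ[X]) (normalization_succ n)
  simp only [legendreP, derivative_C_mul]
  rw [← Function.iterate_succ_apply' (f := derivative),
    ← Function.iterate_succ_apply' (f := derivative)]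
  simp only [nsmul_eq_mul, C_add, C_1, C_mul, map_natCast, map_ofNat, Nat.succ_eq_add_one] at h2 h3 ⊢
  push_cast at h2
  linear_combination h2 - (derivative^[n + 1] ((X ^ 2 - 1 : ℝ[X]) ^ (n + 1))) * h3

/-- `(1-t²) P_{n+1}' = (n+1) (P_n - t P_{n+1})`. -/
lemma legendreP_structure (n : ℕ) :
    (1 - X ^ 2) * derivative (legendreP (n + 1)) =
      C ((n : ℝ) + 1) * (legendreP n - X * legendreP (n + 1)) := by
  linear_combination legendreP_derivative_succ n - X * legendreP_X_mul_derivative n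

/-- `(1-t²) P_n' = (n+1) (t P_n - P_{n+1})`. -/
lemma legendreP_structure' (n : ℕ) :
    (1 - X ^ 2) * derivative (legendreP n) =
      C ((n : ℝ) + 1) * (X * legendreP n - legendreP (n + 1)) := by
  linear_combination X * legendreP_derivative_succ n - legendreP_X_mul_derivative n

/-- Legendre's differential equation `((1-t²) P_n')' = -n(n+1) P_n`. -/
lemma legendreP_ode (n : ℕ) :
    derivative ((1 - X ^ 2) * derivative (legendreP n)) =
      - C ((n : ℝ) * (n + 1)) * legendreP n := by
  have h := congrArg derivative (legendreP_structure' n)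
  rw [h]
  simp only [derivative_C_mul]
  simp only [derivative_sub, derivative_mul, derivative_X, C_mul]
  rw [legendreP_derivative_succ]
  simp only [C_add, C_1]
  ring

/-- Legendre's equation on `[0,1]`: `Q(t) = P_n(2t-1)` satisfies `(t(1-t) Q')' = -n(n+1) Q`. -/
lemma shifted_ode (n : ℕ) :
    derivative (X * (1 - X) * derivative ((legendreP n).comp (2 * X - 1))) =
      - C ((n : ℝ) * (n + 1)) * (legendreP n).comp (2 * X - 1) := by
  have hd : derivative (2 * X - 1 : ℝ[X]) = 2 := by
    simp [derivative_mul]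
  have h := congrArg (fun p => p.comp (2 * X - 1)) (legendreP_ode n)
  have h2 : 2 * (X * (1 - X) * derivative ((legendreP n).comp (2 * X - 1))) =
      ((1 - X ^ 2) * derivative (legendreP n)).comp (2 * X - 1) := by
    simp only [derivative_comp, hd, mul_comp, sub_comp, pow_comp, X_comp, one_comp]
    ring
  have h3 := congrArg derivative h2
  rw [derivative_comp (p := (1 - X ^ 2) * derivative (legendreP n)), h, hd] at h3
  simp only [mul_comp, neg_comp, C_comp] at h3
  have h4 : derivative (2 * (X * (1 - X) * derivative ((legendreP n).comp (2 * X - 1)))) =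
      2 * derivative (X * (1 - X) * derivative ((legendreP n).comp (2 * X - 1))) := by
    rw [derivative_mul]; simp
  rw [h4] at h3
  exact mul_left_cancel₀ two_ne_zero h3

/-- The combination `i P_{i+1} + (2i+1) P_i + (i+1) P_{i-1}` with `i = k + 1`. -/
noncomputable def rowR (k : ℕ) : ℝ[X] :=
  C ((k : ℝ) + 1) * legendreP (k + 2) + C (2 * (k : ℝ) + 3) * legendreP (k + 1) +
    C ((k : ℝ) + 2) * legendreP k

/-- The combination `i(i+1)(i+2) P_{i+1} + (i-1)i(i+1) P_{i-1}` with `i = k + 1`. -/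
noncomputable def rowS (k : ℕ) : ℝ[X] :=
  C (((k : ℝ) + 1) * (k + 2) * (k + 3)) * legendreP (k + 2) +
    C ((k : ℝ) * (k + 1) * (k + 2)) * legendreP k

lemma rowR_derivative (k : ℕ) :
    X * (1 - X) * derivative (rowR k) =
      C (2 * (k : ℝ) + 3) * (X * ((1 - X ^ 2) * derivative (legendreP (k + 1)))) := by
  have h1 := legendreP_derivative_succ (k + 1)
  have h2 := legendreP_X_mul_derivative k
  simp only [rowR, derivative_add, derivative_C_mul]
  simp only [C_add, C_mul, C_1, map_natCast, map_ofNat, Nat.cast_add, Nat.cast_one] at h1 h2 ⊢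
  linear_combination X * (1 - X) * (((k : ℝ[X]) + 1) * h1 - ((k : ℝ[X]) + 2) * h2)

lemma rowR_ode (k : ℕ) : derivative (X * (1 - X) * derivative (rowR k)) = - rowS k := by
  have h1 := legendreP_structure k
  have h2 := legendreP_structure' (k + 1)
  have h3 := legendreP_ode (k + 1)
  rw [rowR_derivative, derivative_C_mul, derivative_mul, derivative_X, h3, rowS]
  simp only [C_add, C_mul, C_1, map_natCast, map_ofNat, Nat.cast_add, Nat.cast_one] at h1 h2 ⊢
  linear_combination -(k : ℝ[X]) * (k + 2) * h1 + ((k : ℝ[X]) + 1) * (k + 3) * h2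

/-- Symmetry of `f ↦ (t(1-t) f')'` on `[0,1]`, applied to `rowR k` and the shifted Legendre
polynomial. -/
lemma integral_row (k j : ℕ) :
    ∫ t in (0:ℝ)..1, (((rowS k - C ((j : ℝ) * (j + 1)) * rowR k) *
      (legendreP j).comp (2 * X - 1)).eval t) = 0 := by
  set Q := (legendreP j).comp (2 * X - 1) with hQ
  set G : ℝ[X] := (X * (1 - X) * derivative Q) * rowR k - (X * (1 - X) * derivative (rowR k)) * Q
    with hG
  have hd : derivative G = (rowS k - C ((j : ℝ) * (j + 1)) * rowR k) * Q := by
    rw [hG, derivative_sub, derivative_mul (f := X * (1 - X) * derivative Q),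
      derivative_mul (f := X * (1 - X) * derivative (rowR k)), rowR_ode, hQ, shifted_ode]
    ring
  rw [← hd, intervalIntegral.integral_eq_sub_of_hasDerivAt (f := fun t => G.eval t)
    (fun t _ => G.hasDerivAt t) ((derivative G).continuous.intervalIntegrable _ _)]
  simp [hG]

/-- The unnormalised coefficients `∫₀¹ P_i(t) P_j(2t-1) dt`. -/
noncomputable def legendreM (i j : ℕ) : ℝ :=
  ∫ t in (0:ℝ)..1, (legendreP i * (legendreP j).comp (2 * X - 1)).eval t

lemma alpertC_eq (i j : ℕ) :
    alpertC i j = Real.sqrt (2 * i + 1) * Real.sqrt (2 * j + 1) * legendreM i j := by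
  have h : ∀ t : ℝ, legendreHat i t * legendreHat j (2 * t - 1) =
      (Real.sqrt ((2 * i + 1) / 2) * Real.sqrt ((2 * j + 1) / 2)) *
        (legendreP i * (legendreP j).comp (2 * X - 1)).eval t := by
    intro t
    rw [legendreHat_eq, legendreHat_eq]
    simp only [eval_mul, eval_comp, eval_sub, eval_X, eval_one, eval_ofNat]
    ring
  simp only [alpertC, h, intervalIntegral.integral_const_mul]
  rw [legendreM, Real.sqrt_div (by positivity), Real.sqrt_div (by positivity)]
  have h2 : Real.sqrt 2 * Real.sqrt 2 = 2 := Real.mul_self_sqrt (by norm_num)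
  have h0 : Real.sqrt 2 ≠ 0 := by positivity
  field_simp
  rw [Real.sq_sqrt (by norm_num)]

lemma legendreM_row (k j : ℕ) :
    ((k : ℝ) + 1) * (k + 2) * (k + 3) * legendreM (k + 2) j +
        (k : ℝ) * (k + 1) * (k + 2) * legendreM k j =
      (j : ℝ) * (j + 1) * (((k : ℝ) + 1) * legendreM (k + 2) j +
        (2 * k + 3) * legendreM (k + 1) j + ((k : ℝ) + 2) * legendreM k j) := by
  have h := integral_row k j
  set Q := (legendreP j).comp (2 * X - 1) with hQ
  have hint : ∀ (a : ℝ) (n : ℕ), IntervalIntegrable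
      (fun t => a * (legendreP n * Q).eval t) MeasureTheory.volume 0 1 := fun a n =>
    (continuous_const.mul (legendreP n * Q).continuous).intervalIntegrable _ _
  set a : ℝ := ((k : ℝ) + 1) * (k + 2) * (k + 3) - (j : ℝ) * (j + 1) * (k + 1) with ha
  set b : ℝ := - ((j : ℝ) * (j + 1) * (2 * k + 3)) with hb
  set c : ℝ := (k : ℝ) * (k + 1) * (k + 2) - (j : ℝ) * (j + 1) * (k + 2) with hc
  have he : ∀ t : ℝ, ((rowS k - C ((j : ℝ) * (j + 1)) * rowR k) * Q).eval t =
      a * (legendreP (k + 2) * Q).eval t + b * (legendreP (k + 1) * Q).eval t +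
        c * (legendreP k * Q).eval t := by
    intro t
    simp only [rowS, rowR, eval_mul, eval_add, eval_sub, eval_C, ha, hb, hc]
    ring
  simp only [he] at h
  rw [intervalIntegral.integral_add ((hint _ _).add (hint _ _)) (hint _ _),
    intervalIntegral.integral_add (hint _ _) (hint _ _)] at h
  simp only [intervalIntegral.integral_const_mul] at h
  simp only [legendreM, ← hQ]
  rw [ha, hb, hc] at h
  linear_combination h

theorem alpertC_gen_eigen_row (i j : ℕ) (hi : 1 ≤ i) (hj : j ≤ i) :
    (i : ℝ) * (i + 1) * (i + 2) / Real.sqrt ((2 * i + 3) * (2 * i + 1)) * alpertC (i + 1) j +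
      ((i : ℝ) - 1) * i * (i + 1) / Real.sqrt ((2 * i + 1) * (2 * i - 1)) * alpertC (i - 1) j =
    (j : ℝ) * (j + 1) *
      ((i : ℝ) / Real.sqrt ((2 * i + 3) * (2 * i + 1)) * alpertC (i + 1) j +
        alpertC i j +
        ((i : ℝ) + 1) / Real.sqrt ((2 * i + 1) * (2 * i - 1)) * alpertC (i - 1) j) := by
  obtain ⟨k, rfl⟩ : ∃ k, i = k + 1 := ⟨i - 1, by omega⟩
  have h := legendreM_row k j
  rw [Nat.add_sub_cancel, alpertC_eq, alpertC_eq, alpertC_eq]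
  push_cast
  have e1 : (2 * ((k : ℝ) + 1) + 3) = 2 * k + 5 := by ring
  have e2 : (2 * ((k : ℝ) + 1) + 1) = 2 * k + 3 := by ring
  have e3 : (2 * ((k : ℝ) + 1) - 1) = 2 * k + 1 := by ring
  have e4 : (2 * ((k : ℝ) + 1 + 1) + 1) = 2 * k + 5 := by ring
  rw [e1, e2, e3, e4, Real.sqrt_mul (by positivity), Real.sqrt_mul (by positivity)]
  have s1 : Real.sqrt (2 * (k : ℝ) + 5) ≠ 0 := by positivity
  have s2 : Real.sqrt (2 * (k : ℝ) + 3) ≠ 0 := by positivity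
  have s3 : Real.sqrt (2 * (k : ℝ) + 1) ≠ 0 := by positivity
  have q2 : Real.sqrt (2 * (k : ℝ) + 3) ^ 2 = 2 * k + 3 := Real.sq_sqrt (by positivity)
  generalize Real.sqrt (2 * (k : ℝ) + 5) = x at *
  generalize Real.sqrt (2 * (k : ℝ) + 3) = y at *
  generalize Real.sqrt (2 * (k : ℝ) + 1) = z at *
  generalize Real.sqrt (2 * (j : ℝ) + 1) = w at *
  -- The factor `x` (resp. `z`) cancels in the outer terms, leaving the common factor `w / y`.
  have t1 : ∀ u m : ℝ, u / (x * y) * (x * w * m) = w / y * (u * m) := by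
    intro u m; field_simp
  have t2 : ∀ u m : ℝ, u / (y * z) * (z * w * m) = w / y * (u * m) := by
    intro u m; field_simp
  have t3 : ∀ m : ℝ, y * w * m = w / y * ((2 * k + 3) * m) := by
    intro m; field_simp; rw [q2]; ring
  rw [t1, t2, t1, t2, t3]
  linear_combination w / y * h
end
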